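/- In the nonlinear setting with standing conditions (N1)–(N5): limsup_{n→∞} H_{h_n}(J_n) ≤ 1. -/

import Mathlib

open Set Filter MeasureTheory Topology

noncomputable section

/-- Composition `g_{i₁} ∘ g_{i₂} ∘ ⋯ ∘ g_{i_l}` along a finite word. -/
def wordComp (g : ℕ → ℝ → ℝ) : List ℕ → ℝ → ℝ
  | [] => id
  | k :: w => g k ∘ wordComp g w

/-- The limit set `J_n` of the IFS `S_n = {g_1, …, g_n}`. -/
def limitSet (g : ℕ → ℝ → ℝ) (n : ℕ) : Set ℝ :=
  ⋂ l : ℕ, ⋃ w ∈ {w : List ℕ | w.length = l + 1 ∧ ∀ i ∈ w, 1 ≤ i ∧ i ≤ n},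
    wordComp g w '' Set.Icc (0 : ℝ) 1

/-- The distortion `κ(g) = sup_{x,y ∈ [0,1]} |g′(y)|/|g′(x)|` of a map with derivative `f'`. -/
def distortion (f' : ℝ → ℝ) : ℝ :=
  ⨆ x ∈ Set.Icc (0 : ℝ) 1, ⨆ y ∈ Set.Icc (0 : ℝ) 1, |f' y| / |f' x|

/-- The nonlinear setting of the paper: a strictly decreasing sequence `b_k → 0` with `b_0 = 1`,
    decreasing `C²` diffeomorphisms `g_k : [0,1] → [b_k, b_{k-1}]` (with first and second
    derivatives `g'` and `g''`), the Hausdorff dimensions `h_n` of the limit sets `J_n`, and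
    the standing conditions (N1)–(N5). -/
structure NonlinearIFS where
  b : ℕ → ℝ
  g : ℕ → ℝ → ℝ
  g' : ℕ → ℝ → ℝ
  g'' : ℕ → ℝ → ℝ
  h : ℕ → ℝ
  b_zero : b 0 = 1
  b_anti : StrictAnti b
  b_lim : Filter.Tendsto b Filter.atTop (nhds 0)
  g_image : ∀ k, 1 ≤ k → g k '' Set.Icc (0 : ℝ) 1 = Set.Icc (b k) (b (k - 1))
  g_anti : ∀ k, 1 ≤ k → StrictAntiOn (g k) (Set.Icc (0 : ℝ) 1)
  g_zero : ∀ k, 1 ≤ k → g k 0 = b (k - 1)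
  g_one : ∀ k, 1 ≤ k → g k 1 = b k
  deriv1 : ∀ k, 1 ≤ k → ∀ x ∈ Set.Icc (0 : ℝ) 1, HasDerivAt (g k) (g' k x) x
  deriv2 : ∀ k, 1 ≤ k → ∀ x ∈ Set.Icc (0 : ℝ) 1, HasDerivAt (g' k) (g'' k x) x
  deriv_ne : ∀ k, 1 ≤ k → ∀ x ∈ Set.Icc (0 : ℝ) 1, g' k x ≠ 0
  h_dim : ∀ n, 1 ≤ n → dimH (limitSet g n) = ENNReal.ofReal (h n)
  N1 : Filter.Tendsto (fun n : ℕ => (1 - h n) * Real.log n) Filter.atTop (nhds 0)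
  N2 : Filter.Tendsto (fun n : ℕ => ⨆ k ∈ Set.Ici n, b k / b (k + 1)) Filter.atTop (nhds 1)
  N3 : ∃ c : ℝ, 0 < c ∧ ∀ n, 1 ≤ n → ∀ x ∈ Set.Icc (0 : ℝ) 1, |g'' n x / g' n x| < c
  N4 : Filter.Tendsto (fun n : ℕ => distortion (g' n)) Filter.atTop (nhds 1)
  N5 : ∃ α : ℝ, α < 1 ∧ ∀ n, 1 ≤ n → ∀ x ∈ Set.Icc (0 : ℝ) 1, |g' n x| < α

/-- The normalized Hausdorff measure `m_n(A) = H_{h_n}(A ∩ J_n)/H_{h_n}(J_n)`. -/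
def normMeas (S : NonlinearIFS) (n : ℕ) (A : Set ℝ) : ENNReal :=
  μH[S.h n] (A ∩ limitSet S.g n) / μH[S.h n] (limitSet S.g n)

/-!
Fix `κ > 1`. Since the images of the maps `g_k` shrink to `0` and `κ(g_k) → 1`, all words whose last
letter is at least some `N` have distortion at most `κ`, whatever the earlier letters are.

Let `D w` be the length of the cell `g_w([0,1])`. If `F` is a finite prefix-free set of words over
`{1, …, n}` with last letters `≥ N`, then its concatenations again have distortion at most `κ`, so
`D` is supermultiplicative on them up to the factor `κ`. Were `∑_{w ∈ F} D(w)^t > κ^t` for some `t`,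
the Bernoulli measure with weights proportional to `D(w)^t` and the mass distribution principle
would give `dim J_n ≥ t`. Applied to `t` slightly above `h_n`, this shows
`∑_{w ∈ F} D(w)^{h_n} ≤ κ^{h_n}`.

Now read a word until the first letter `≥ N` after position `l`. These stopped words are
prefix-free, so their cells satisfy the bound, and they cover `J_n` up to the cells of words that
have not stopped by time `l + m`. Appending `N` stops such a word and shrinks its cell by a bounded
factor only, so the sums over unstopped words are terms of a convergent series and tend to `0` as
`m → ∞`. As `l → ∞` the diameters tend to `0`, hence `H_{h_n}(J_n) ≤ κ^{h_n} ≤ κ` for all large `n`.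
-/

open scoped ENNReal NNReal Function

section Words

variable {α : Type*} {A B : Set α}

/-- The set of finite words over the alphabet `A`. -/
def wordsOver (A : Set α) : Set (List α) := {w | ∀ i ∈ w, i ∈ A}

lemma cons_mem_wordsOver {k : α} {w : List α} :
    k :: w ∈ wordsOver A ↔ k ∈ A ∧ w ∈ wordsOver A :=
  List.forall_mem_cons

lemma append_mem_wordsOver {v w : List α} :
    v ++ w ∈ wordsOver A ↔ v ∈ wordsOver A ∧ w ∈ wordsOver A :=
  List.forall_mem_append

lemma singleton_mem_wordsOver {k : α} : [k] ∈ wordsOver A ↔ k ∈ A :=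
  List.forall_mem_singleton

lemma wordsOver_mono (h : A ⊆ B) : wordsOver A ⊆ wordsOver B :=
  fun _ hw i hi => h (hw i hi)

lemma flatten_mem_wordsOver {u : List (List α)} (hu : ∀ w ∈ u, w ∈ wordsOver A) :
    u.flatten ∈ wordsOver A := by
  intro i hi
  obtain ⟨w, hw, hiw⟩ := List.mem_flatten.1 hi
  exact hu w hw i hiw

lemma map_coe_mem_wordsOver {F : Finset α} (u : List F) : u.map (↑) ∈ wordsOver (F : Set α) :=
  List.forall_mem_map.2 fun w _ => w.2

end Words

section CompList

variable {ι X : Type*}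

/-- The composition `f_{i₁} ∘ ⋯ ∘ f_{i_l}` of self-maps along the word `i₁ ⋯ i_l`, over an arbitrary
alphabet, so that the letters may themselves be words of another system. -/
def compList (f : ι → X → X) (w : List ι) : X → X :=
  w.foldr (fun i φ => f i ∘ φ) id

variable (f : ι → X → X)

lemma compList_nil : compList f [] = id := rfl

lemma compList_cons (i : ι) (w : List ι) : compList f (i :: w) = f i ∘ compList f w := rfl

lemma compList_append (v w : List ι) :
    compList f (v ++ w) = compList f v ∘ compList f w := by
  induction v with
  | nil => rfl
  | cons i v ih => rw [List.cons_append, compList_cons, compList_cons, ih, Function.comp_assoc]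

lemma compList_compList {κ : Type*} (φ : κ → List ι) (u : List κ) :
    compList (fun i => compList f (φ i)) u = compList f (u.map φ).flatten := by
  induction u with
  | nil => rfl
  | cons i u ih => rw [compList_cons, ih, List.map_cons, List.flatten_cons, compList_append]

lemma wordComp_eq_compList (g : ℕ → ℝ → ℝ) (w : List ℕ) : wordComp g w = compList g w := by
  induction w with
  | nil => rfl
  | cons k w ih => rw [wordComp, compList_cons, ih]

variable {f} {w : List ι} {s : Set X}

lemma mapsTo_compList (h : ∀ i ∈ w, MapsTo (f i) s s) : MapsTo (compList f w) s s := by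
  induction w with
  | nil => exact mapsTo_id s
  | cons i w ih =>
    rw [List.forall_mem_cons] at h
    exact h.1.comp (ih h.2)

lemma injOn_compList (hmaps : ∀ i ∈ w, MapsTo (f i) s s) (hinj : ∀ i ∈ w, InjOn (f i) s) :
    InjOn (compList f w) s := by
  induction w with
  | nil => exact injOn_id s
  | cons i w ih =>
    rw [List.forall_mem_cons] at hmaps hinj
    exact hinj.1.comp (ih hmaps.2 hinj.2) (mapsTo_compList hmaps.2)

lemma lipschitzOnWith_compList [PseudoEMetricSpace X] {α : ℝ≥0}
    (hmaps : ∀ i ∈ w, MapsTo (f i) s s) (hlip : ∀ i ∈ w, LipschitzOnWith α (f i) s) :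
    LipschitzOnWith (α ^ w.length) (compList f w) s := by
  induction w with
  | nil => simpa [compList_nil] using LipschitzWith.id.lipschitzOnWith
  | cons i w ih =>
    rw [List.forall_mem_cons] at hmaps hlip
    rw [List.length_cons, pow_succ']
    exact hlip.1.comp (ih hmaps.2 hlip.2) (mapsTo_compList hmaps.2)

end CompList

section MassDistribution

theorem ofReal_le_dimH_of_measure_le_ediam_rpow {X : Type*} [EMetricSpace X] [MeasurableSpace X]
    [BorelSpace X] {μ : Measure X} {E : Set X} {t : ℝ} {c : ℝ≥0∞} (ht : 0 ≤ t) (hc : c ≠ ∞)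
    (hE : μ E ≠ 0) (hμ : ∀ s, IsClosed s → μ s ≤ c * Metric.ediam s ^ t) :
    ENNReal.ofReal t ≤ dimH E := by
  -- Passing to `c + 1` avoids dividing by `c = 0`.
  have hle : (c + 1)⁻¹ • μ ≤ μH[t] := by
    refine Measure.le_hausdorffMeasure t _ 1 one_pos fun s _ => ?_
    rw [Measure.smul_apply, smul_eq_mul, ENNReal.inv_mul_le_iff (by simp) (by finiteness)]
    calc μ s ≤ μ (closure s) := measure_mono subset_closure
      _ ≤ c * Metric.ediam (closure s) ^ t := hμ _ isClosed_closure
      _ ≤ (c + 1) * Metric.ediam s ^ t := by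
        rw [Metric.ediam_closure]
        gcongr
        exact le_self_add
  have hpos : μH[(t.toNNReal : ℝ)] E ≠ 0 := by
    rw [Real.coe_toNNReal t ht]
    refine ne_bot_of_le_ne_bot ?_ (hle E)
    simp [hE, hc]
  exact le_dimH_of_hausdorffMeasure_ne_zero hpos

variable {ι : Type*} [MeasurableSpace ι] {p : PMF ι}

/-- The law of an infinite sequence of independent letters with distribution `p`. -/
def bernoulliMeasure (p : PMF ι) : Measure (ℕ → ι) :=
  Measure.infinitePi fun _ => p.toMeasure

instance : IsProbabilityMeasure (bernoulliMeasure p) :=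
  inferInstanceAs (IsProbabilityMeasure (Measure.infinitePi fun _ : ℕ => p.toMeasure))

variable [MeasurableSingletonClass ι]

lemma bernoulliMeasure_cylinder (ω : ℕ → ι) (j : ℕ) :
    bernoulliMeasure p {ω' | ∀ i < j, ω i = ω' i} = ∏ i ∈ Finset.range j, p (ω i) := by
  have hpi : {ω' : ℕ → ι | ∀ i < j, ω i = ω' i} =
      (Finset.range j : Set ℕ).pi fun i => {ω i} := by
    ext ω'
    simp [eq_comm]
  rw [hpi, bernoulliMeasure, Measure.infinitePi_pi _ fun i _ => measurableSet_singleton (ω i)]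
  simp [PMF.toMeasure_apply_singleton]

variable {X : Type*} [EMetricSpace X] {code : (ℕ → ι) → X} {t : ℝ} {c : ℝ≥0∞}

lemma bernoulliMeasure_preimage_le (ht : 0 ≤ t)
    (hsep : ∀ ω ω' j, (∀ i < j, ω i = ω' i) → ω j ≠ ω' j →
      ∏ i ∈ Finset.range j, p (ω i) ≤ c * edist (code ω) (code ω') ^ t)
    (hp : ∀ ω : ℕ → ι, Tendsto (fun j => ∏ i ∈ Finset.range j, p (ω i)) atTop (𝓝 0))
    (s : Set X) : bernoulliMeasure p (code ⁻¹' s) ≤ c * Metric.ediam s ^ t := by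
  rcases (code ⁻¹' s).eq_empty_or_nonempty with hempty | ⟨ω, hω⟩
  · simp [hempty]
  have hcylinder {j : ℕ} (h : ∀ i < j, ∀ ω' ∈ code ⁻¹' s, ω i = ω' i) :
      bernoulliMeasure p (code ⁻¹' s) ≤ ∏ i ∈ Finset.range j, p (ω i) := by
    rw [← bernoulliMeasure_cylinder]
    exact measure_mono fun ω' hω' i hi => h i hi ω' hω'
  by_cases hbranch : ∃ j, ∃ ω' ∈ code ⁻¹' s, ω j ≠ ω' j
  · classical
    obtain ⟨ω', hω', hne⟩ := Nat.find_spec hbranch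
    have hagree : ∀ i < Nat.find hbranch, ∀ ω' ∈ code ⁻¹' s, ω i = ω' i := fun i hi ω' hω' =>
      by_contra fun h => Nat.find_min hbranch hi ⟨ω', hω', h⟩
    calc bernoulliMeasure p (code ⁻¹' s)
        ≤ ∏ i ∈ Finset.range (Nat.find hbranch), p (ω i) := hcylinder hagree
      _ ≤ c * edist (code ω) (code ω') ^ t :=
        hsep ω ω' _ (fun i hi => hagree i hi ω' hω') hne
      _ ≤ c * Metric.ediam s ^ t := by
        gcongr
        exact Metric.edist_le_ediam_of_mem hω hω'
  · push Not at hbranch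
    exact (ge_of_tendsto' (hp ω) fun j => hcylinder fun i _ => hbranch i).trans zero_le

theorem ofReal_le_dimH_range_of_bernoulli [MeasurableSpace X] [BorelSpace X]
    (hcode : Measurable code) (ht : 0 ≤ t) (hc : c ≠ ∞)
    (hsep : ∀ ω ω' j, (∀ i < j, ω i = ω' i) → ω j ≠ ω' j →
      ∏ i ∈ Finset.range j, p (ω i) ≤ c * edist (code ω) (code ω') ^ t)
    (hp : ∀ ω : ℕ → ι, Tendsto (fun j => ∏ i ∈ Finset.range j, p (ω i)) atTop (𝓝 0)) :
    ENNReal.ofReal t ≤ dimH (range code) := by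
  have hrange : (bernoulliMeasure p).map code (range code) ≠ 0 := by
    refine ne_bot_of_le_ne_bot one_ne_zero ?_
    simpa using
      Measure.le_map_apply (μ := bernoulliMeasure p) hcode.aemeasurable (range code)
  refine ofReal_le_dimH_of_measure_le_ediam_rpow ht hc hrange fun s hs => ?_
  rw [Measure.map_apply hcode hs.measurableSet]
  exact bernoulliMeasure_preimage_le ht hsep hp s

end MassDistribution

section StoppedWords

/-- The words over `{1, …, n}` that stop at the first letter `≥ N` after the first `l` letters. -/
def stoppedWords (n N l : ℕ) : Set (List ℕ) :=
  {w ∈ wordsOver (Icc 1 n) |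
    ∃ v z k, w = v ++ (z ++ [k]) ∧ v.length = l ∧ z ∈ wordsOver (Iio N) ∧ N ≤ k}

/-- The words of length `l + m` over `{1, …, n}` without letters `≥ N` after the first `l` letters,
which have not yet reached `stoppedWords n N l`. -/
def unstoppedWords (n N l m : ℕ) : Set (List ℕ) :=
  {w ∈ wordsOver (Icc 1 n) |
    ∃ v z, w = v ++ z ∧ v.length = l ∧ z.length = m ∧ z ∈ wordsOver (Iio N)}

variable {v w : List ℕ} {n N l m : ℕ}

lemma length_of_mem_unstoppedWords (hw : w ∈ unstoppedWords n N l m) : w.length = l + m := by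
  obtain ⟨-, v, z, rfl, rfl, rfl, -⟩ := hw
  exact List.length_append

lemma le_length_of_mem_stoppedWords (hw : w ∈ stoppedWords n N l) : l ≤ w.length := by
  obtain ⟨-, v, z, k, rfl, rfl, -⟩ := hw
  simp

lemma append_singleton_mem_stoppedWords (hN : N ∈ Icc 1 n) (hw : w ∈ unstoppedWords n N l m) :
    w ++ [N] ∈ stoppedWords n N l := by
  obtain ⟨hw, v, z, rfl, hv, -, hz⟩ := hw
  exact ⟨append_mem_wordsOver.2 ⟨hw, singleton_mem_wordsOver.2 hN⟩, v, z, N,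
    List.append_assoc .., hv, hz, le_rfl⟩

lemma eq_of_prefix_of_mem_stoppedWords (hv : v ∈ stoppedWords n N l)
    (hw : w ∈ stoppedWords n N l) (hvw : v <+: w) : v = w := by
  obtain ⟨-, v₀, z, k, rfl, hv₀, -, hk⟩ := hv
  obtain ⟨-, w₀, z', k', rfl, hw₀, hz', -⟩ := hw
  obtain rfl : v₀ = w₀ := by
    have h := List.prefix_of_prefix_length_le ((List.prefix_append _ _).trans hvw)
      (List.prefix_append w₀ _) (hv₀.trans hw₀.symm).le
    exact h.eq_of_length (hv₀.trans hw₀.symm)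
  rw [List.prefix_append_right_inj, List.prefix_concat_iff] at hvw
  rcases hvw with heq | hprefix
  · rw [heq]
  · exact absurd (hz' k (hprefix.subset (by simp))) (not_lt.2 hk)

lemma mem_wordsOver_Iio_or_exists_prefix (N : ℕ) (w : List ℕ) :
    w ∈ wordsOver (Iio N) ∨ ∃ z k, z ++ [k] <+: w ∧ z ∈ wordsOver (Iio N) ∧ N ≤ k := by
  induction w with
  | nil => exact .inl (by simp [wordsOver])
  | cons i w ih =>
    rcases le_or_gt N i with hi | hi
    · exact .inr ⟨[], i, by simp, by simp [wordsOver], hi⟩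
    rcases ih with hw | ⟨z, k, hprefix, hz, hk⟩
    · exact .inl (cons_mem_wordsOver.2 ⟨hi, hw⟩)
    · exact .inr ⟨i :: z, k, by simpa using hprefix, cons_mem_wordsOver.2 ⟨hi, hz⟩, hk⟩

end StoppedWords

section DisjointContractions

variable {ι : Type*}

/-- The word formed by the first `j` letters of the sequence `ω`. -/
def initialWord (ω : ℕ → ι) (j : ℕ) : List ι := List.ofFn fun i : Fin j => ω i

lemma length_initialWord (ω : ℕ → ι) (j : ℕ) : (initialWord ω j).length = j :=
  List.length_ofFn

lemma initialWord_succ (ω : ℕ → ι) (j : ℕ) :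
    initialWord ω (j + 1) = initialWord ω j ++ [ω j] := by
  rw [initialWord, List.ofFn_succ', List.concat_eq_append]
  rfl

lemma initialWord_congr {ω ω' : ℕ → ι} {j : ℕ} (h : ∀ i < j, ω i = ω' i) :
    initialWord ω j = initialWord ω' j :=
  congrArg List.ofFn (funext fun i => h i i.2)

lemma prod_map_initialWord {M : Type*} [CommMonoid M] (p : ι → M) (ω : ℕ → ι) (j : ℕ) :
    ((initialWord ω j).map p).prod = ∏ i ∈ Finset.range j, p (ω i) := by
  rw [initialWord, List.map_ofFn, List.prod_ofFn, Finset.prod_range]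
  rfl

lemma measurable_comp_initialWord [Finite ι] [MeasurableSpace ι] [MeasurableSingletonClass ι]
    {X : Type*} [MeasurableSpace X] (φ : List ι → X) (j : ℕ) :
    Measurable fun ω => φ (initialWord ω j) :=
  (Measurable.of_discrete (f := fun v : Fin j → ι => φ (List.ofFn v))).comp
    (measurable_pi_lambda _ fun _ => measurable_pi_apply _)

lemma exists_pos_le_edist_of_pairwise_disjoint {X : Type*} [EMetricSpace X] [Finite ι]
    {s : ι → Set X} (hs : ∀ i, IsCompact (s i)) (hdisj : Pairwise (Disjoint on s)) :
    ∃ r : ℝ≥0, 0 < r ∧ ∀ i j, i ≠ j → ∀ x ∈ s i, ∀ y ∈ s j, (r : ℝ≥0∞) ≤ edist x y := by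
  have hsmall : ∀ᶠ r : ℝ≥0 in 𝓝[>] 0, ∀ i j, i ≠ j → ∀ x ∈ s i, ∀ y ∈ s j,
      (r : ℝ≥0∞) ≤ edist x y := by
    simp only [eventually_all]
    intro i j hij
    obtain ⟨r, hr, hlt⟩ :=
      Metric.exists_pos_forall_lt_edist (hs i) (hs j).isClosed (hdisj hij)
    filter_upwards [Ioo_mem_nhdsGT hr] with r' hr' x hx y hy
    exact (ENNReal.coe_le_coe.2 hr'.2.le).trans (hlt x hx y hy).le
  exact (eventually_mem_nhdsWithin.and hsmall).exists

lemma tendsto_coe_pow_mul_nhds_zero {α : ℝ≥0} (hα : α < 1) {d : ℝ≥0∞} (hd : d ≠ ∞) :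
    Tendsto (fun j : ℕ => (α : ℝ≥0∞) ^ j * d) atTop (𝓝 0) := by
  simpa using ENNReal.Tendsto.mul_const
    (ENNReal.tendsto_pow_atTop_nhds_zero_of_lt_one (ENNReal.coe_lt_one_iff.2 hα)) (Or.inr hd)

variable {X : Type*} [MetricSpace X] {f : ι → X → X} {K : Set X} {α : ℝ≥0}

lemma exists_mem_image_initialWord (hK : IsCompact K) (hne : K.Nonempty)
    (hmaps : ∀ i, MapsTo (f i) K K) (hlip : ∀ i, LipschitzOnWith α (f i) K) (ω : ℕ → ι) :
    ∃ x, ∀ j, x ∈ compList f (initialWord ω j) '' K := by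
  have hcompact (j : ℕ) : IsCompact (compList f (initialWord ω j) '' K) :=
    hK.image_of_continuousOn
      (lipschitzOnWith_compList (fun i _ => hmaps i) fun i _ => hlip i).continuousOn
  have hnested (j : ℕ) : compList f (initialWord ω (j + 1)) '' K ⊆
      compList f (initialWord ω j) '' K := by
    rw [initialWord_succ, compList_append, image_comp]
    exact image_mono (mapsTo_compList fun i _ => hmaps i).image_subset
  obtain ⟨x, hx⟩ := IsCompact.nonempty_iInter_of_sequence_nonempty_isCompact_isClosed
    (fun j => compList f (initialWord ω j) '' K) hnested (fun j => hne.image _)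
    (hcompact 0) (fun j => (hcompact j).isClosed)
  exact ⟨x, mem_iInter.1 hx⟩

lemma edist_compList_initialWord_le (hmaps : ∀ i, MapsTo (f i) K K)
    (hlip : ∀ i, LipschitzOnWith α (f i) K) (ω : ℕ → ι) (j : ℕ) {x y : X} (hx : x ∈ K)
    (hy : y ∈ K) :
    edist (compList f (initialWord ω j) x) (compList f (initialWord ω j) y)
      ≤ (α : ℝ≥0∞) ^ j * edist x y := by
  simpa [length_initialWord] using
    lipschitzOnWith_compList (w := initialWord ω j) (fun i _ => hmaps i) (fun i _ => hlip i) hx hy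

lemma measurable_of_mem_image_initialWord [Finite ι] [MeasurableSpace ι]
    [MeasurableSingletonClass ι] [MeasurableSpace X] [BorelSpace X] (hK : Bornology.IsBounded K)
    (hne : K.Nonempty) (hmaps : ∀ i, MapsTo (f i) K K) (hlip : ∀ i, LipschitzOnWith α (f i) K)
    (hα : α < 1) {code : (ℕ → ι) → X}
    (hcode : ∀ ω j, code ω ∈ compList f (initialWord ω j) '' K) : Measurable code := by
  obtain ⟨x₀, hx₀⟩ := hne
  refine measurable_of_tendsto_metrizable
    (fun j => measurable_comp_initialWord (fun u => compList f u x₀) j)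
    (tendsto_pi_nhds.2 fun ω => tendsto_iff_edist_tendsto_0.2 ?_)
  refine tendsto_of_tendsto_of_tendsto_of_le_of_le tendsto_const_nhds
    (tendsto_coe_pow_mul_nhds_zero hα hK.ediam_ne_top) (fun _ => zero_le) fun j => ?_
  obtain ⟨y, hy, hcodey⟩ := hcode ω j
  dsimp only
  rw [← hcodey]
  exact (edist_compList_initialWord_le hmaps hlip ω j hx₀ hy).trans
    (mul_le_mul_right (Metric.edist_le_ediam_of_mem hx₀ hy) _)

variable {p : PMF ι} {t : ℝ} {C : ℝ≥0∞}

lemma tendsto_prod_of_mul_edist_rpow_le (hK : K.Nontrivial) (hmaps : ∀ i, MapsTo (f i) K K)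
    (hlip : ∀ i, LipschitzOnWith α (f i) K) (hα : α < 1) (ht : 0 < t) (hC : C ≠ ∞)
    (hp : ∀ u, ∀ x ∈ K, ∀ y ∈ K,
      (u.map p).prod * edist x y ^ t ≤ C * edist (compList f u x) (compList f u y) ^ t)
    (ω : ℕ → ι) : Tendsto (fun j => ∏ i ∈ Finset.range j, p (ω i)) atTop (𝓝 0) := by
  obtain ⟨x, hx, y, hy, hxy⟩ := hK
  have hne0 : edist x y ^ t ≠ 0 := by simp [ENNReal.rpow_eq_zero_iff, hxy]
  have hnetop : edist x y ^ t ≠ ∞ := by simp [ENNReal.rpow_eq_top_iff, ht.le, edist_ne_top]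
  have hlim : Tendsto (fun j : ℕ => C * ((α : ℝ≥0∞) ^ j * edist x y) ^ t / edist x y ^ t)
      atTop (𝓝 0) := by
    have hpow := (ENNReal.continuous_rpow_const (y := t)).tendsto 0 |>.comp
      (tendsto_coe_pow_mul_nhds_zero hα (edist_ne_top x y))
    rw [ENNReal.zero_rpow_of_pos ht] at hpow
    simpa using ENNReal.Tendsto.div_const (ENNReal.Tendsto.const_mul hpow (Or.inr hC))
      (Or.inr hne0)
  refine tendsto_of_tendsto_of_tendsto_of_le_of_le tendsto_const_nhds hlim (fun _ => zero_le)
    fun j => ?_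
  rw [ENNReal.le_div_iff_mul_le (Or.inl hne0) (Or.inl hnetop), ← prod_map_initialWord]
  refine (hp _ x hx y hy).trans ?_
  gcongr
  exact edist_compList_initialWord_le hmaps hlip ω j hx hy

-- Two codes that split after the common word `u` lie in `f_u(f_i K)` and `f_u(f_j K)` with `i ≠ j`.
lemma prod_le_mul_edist_code_rpow (hmaps : ∀ i, MapsTo (f i) K K) {r : ℝ≥0} (hr : 0 < r)
    (hsep : ∀ i j, i ≠ j → ∀ x ∈ f i '' K, ∀ y ∈ f j '' K, (r : ℝ≥0∞) ≤ edist x y) (ht : 0 < t)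
    (hp : ∀ u, ∀ x ∈ K, ∀ y ∈ K,
      (u.map p).prod * edist x y ^ t ≤ C * edist (compList f u x) (compList f u y) ^ t)
    {code : (ℕ → ι) → X} (hcode : ∀ ω j, code ω ∈ compList f (initialWord ω j) '' K)
    {ω ω' : ℕ → ι} {j : ℕ} (hagree : ∀ i < j, ω i = ω' i) (hne : ω j ≠ ω' j) :
    ∏ i ∈ Finset.range j, p (ω i) ≤ C / r ^ t * edist (code ω) (code ω') ^ t := by
  have hsplit (ω : ℕ → ι) : ∃ x ∈ f (ω j) '' K, compList f (initialWord ω j) x = code ω := by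
    obtain ⟨x, hx, hxω⟩ := hcode ω (j + 1)
    rw [initialWord_succ, compList_append] at hxω
    exact ⟨f (ω j) x, mem_image_of_mem _ hx, hxω⟩
  obtain ⟨x, hx, hxω⟩ := hsplit ω
  obtain ⟨y, hy, hyω'⟩ := hsplit ω'
  rw [← initialWord_congr hagree] at hyω'
  have hr0 : (r : ℝ≥0∞) ^ t ≠ 0 := by simp [ENNReal.rpow_eq_zero_iff, hr.ne']
  have hrtop : (r : ℝ≥0∞) ^ t ≠ ∞ := by simp [ENNReal.rpow_eq_top_iff, ht.le]
  rw [← prod_map_initialWord, ENNReal.mul_comm_div, ← mul_div_assoc,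
    ENNReal.le_div_iff_mul_le (Or.inl hr0) (Or.inl hrtop)]
  calc ((initialWord ω j).map p).prod * (r : ℝ≥0∞) ^ t
      ≤ ((initialWord ω j).map p).prod * edist x y ^ t := by
        gcongr
        exact hsep _ _ hne x hx y hy
    _ ≤ C * edist (code ω) (code ω') ^ t := by
        rw [← hxω, ← hyω']
        exact hp _ x ((hmaps _).image_subset hx) y ((hmaps _).image_subset hy)

theorem ofReal_le_dimH_of_disjoint_contractions [Finite ι] [MeasurableSpace X] [BorelSpace X]
    (hK : IsCompact K) (hnontrivial : K.Nontrivial) (hmaps : ∀ i, MapsTo (f i) K K)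
    (hlip : ∀ i, LipschitzOnWith α (f i) K) (hα : α < 1)
    (hdisj : Pairwise (Disjoint on fun i => f i '' K)) (ht : 0 < t) (hC : C ≠ ∞)
    (hp : ∀ u, ∀ x ∈ K, ∀ y ∈ K,
      (u.map p).prod * edist x y ^ t ≤ C * edist (compList f u x) (compList f u y) ^ t) :
    ENNReal.ofReal t ≤ dimH {x | ∀ l, ∃ u : List ι, u.length = l ∧ x ∈ compList f u '' K} := by
  let _ : MeasurableSpace ι := ⊤
  have : DiscreteMeasurableSpace ι := ⟨fun _ => trivial⟩
  obtain ⟨r, hr, hsep⟩ := exists_pos_le_edist_of_pairwise_disjoint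
    (fun i => hK.image_of_continuousOn (hlip i).continuousOn) hdisj
  choose code hcode using exists_mem_image_initialWord hK hnontrivial.nonempty hmaps hlip
  have hconst : C / (r : ℝ≥0∞) ^ t ≠ ∞ :=
    ENNReal.div_ne_top hC (by simp [ENNReal.rpow_eq_zero_iff, hr.ne'])
  calc ENNReal.ofReal t
      ≤ dimH (range code) := ofReal_le_dimH_range_of_bernoulli
        (measurable_of_mem_image_initialWord hK.isBounded hnontrivial.nonempty hmaps hlip hα
          hcode)
        ht.le hconst
        (fun ω ω' j => prod_le_mul_edist_code_rpow hmaps hr hsep ht hp hcode)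
        (tendsto_prod_of_mul_edist_rpow_le hnontrivial hmaps hlip hα ht hC hp)
    _ ≤ dimH {x | ∀ l, ∃ u : List ι, u.length = l ∧ x ∈ compList f u '' K} := by
      refine dimH_mono (range_subset_iff.2 fun ω l => ?_)
      exact ⟨initialWord ω l, length_initialWord ω l, hcode ω l⟩

end DisjointContractions

section Distortion

variable {X Y Z : Type*} [MetricSpace X] [MetricSpace Y] [MetricSpace Z]

/-- The ratios `dist (f x) (f y) / dist x y` over pairs of distinct points of `s` differ at most by
the factor `C`, with denominators cleared. For a diffeomorphism `f` of an interval `s` this says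
that the distortion `κ(f)` is at most `C`, but it needs no derivative. -/
def DistortionLE (f : X → Y) (s : Set X) (C : ℝ≥0) : Prop :=
  ∀ ⦃x⦄, x ∈ s → ∀ ⦃y⦄, y ∈ s → ∀ ⦃x'⦄, x' ∈ s → ∀ ⦃y'⦄, y' ∈ s →
    nndist (f x) (f y) * nndist x' y' ≤ C * (nndist (f x') (f y') * nndist x y)

namespace DistortionLE

variable {s : Set X} {C C' : ℝ≥0}

protected lemma id : DistortionLE id s 1 := fun x _ y _ x' _ y' _ => by
  simp [mul_comm]

lemma mono {f : X → Y} (hf : DistortionLE f s C) (hC : C ≤ C') : DistortionLE f s C' :=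
  fun _ hx _ hy _ hx' _ hy' => (hf hx hy hx' hy').trans (mul_le_mul_left hC _)

lemma comp {f : Y → Z} {g : X → Y} {t : Set Y} (hf : DistortionLE f t C)
    (hg : DistortionLE g s C') (hmaps : MapsTo g s t) (hinj : InjOn g s) :
    DistortionLE (f ∘ g) s (C * C') := by
  intro x hx y hy x' hx' y' hy'
  rcases eq_or_ne x y with rfl | hxy
  · simp
  rcases eq_or_ne x' y' with rfl | hxy'
  · simp
  have hpos : 0 < nndist (g x) (g y) * nndist (g x') (g y') :=
    mul_pos (pos_iff_ne_zero.2 (nndist_eq_zero.not.2 (hinj.ne hx hy hxy)))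
      (pos_iff_ne_zero.2 (nndist_eq_zero.not.2 (hinj.ne hx' hy' hxy')))
  have hf' := hf (hmaps hx) (hmaps hy) (hmaps hx') (hmaps hy')
  have hg' := hg hx hy hx' hy'
  refine le_of_mul_le_mul_right ?_ hpos
  calc nndist ((f ∘ g) x) ((f ∘ g) y) * nndist x' y' *
        (nndist (g x) (g y) * nndist (g x') (g y'))
      = nndist (f (g x)) (f (g y)) * nndist (g x') (g y') *
        (nndist (g x) (g y) * nndist x' y') := by
        simp only [Function.comp_apply]
        ring
    _ ≤ C * (nndist (f (g x')) (f (g y')) * nndist (g x) (g y)) *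
        (C' * (nndist (g x') (g y') * nndist x y)) := mul_le_mul' hf' hg'
    _ = C * C' * (nndist ((f ∘ g) x') ((f ∘ g) y') * nndist x y) *
        (nndist (g x) (g y) * nndist (g x') (g y')) := by
        simp only [Function.comp_apply]
        ring

end DistortionLE

lemma exists_dist_eq_abs_deriv_mul {f f' : ℝ → ℝ} {s : Set ℝ} (hs : s.OrdConnected)
    (hf : ∀ x ∈ s, HasDerivAt f (f' x) x) {x y : ℝ} (hx : x ∈ s) (hy : y ∈ s) :
    ∃ ξ ∈ s, dist (f x) (f y) = |f' ξ| * dist x y := by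
  wlog hxy : x < y generalizing x y with hwlog
  · rcases (not_lt.1 hxy).eq_or_lt with rfl | hyx
    · exact ⟨y, hy, by simp⟩
    · simpa only [dist_comm] using hwlog hy hx hyx
  have hsub : Icc x y ⊆ s := hs.out hx hy
  obtain ⟨ξ, hξ, hslope⟩ := exists_hasDerivAt_eq_slope f f' hxy
    (fun z hz => (hf z (hsub hz)).continuousAt.continuousWithinAt)
    (fun z hz => hf z (hsub (Ioo_subset_Icc_self hz)))
  refine ⟨ξ, hsub (Ioo_subset_Icc_self hξ), ?_⟩
  rw [hslope, abs_div, dist_comm, Real.dist_eq, dist_comm, Real.dist_eq,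
    div_mul_cancel₀ _ (abs_ne_zero.2 (sub_ne_zero.2 hxy.ne'))]

lemma distortionLE_of_abs_deriv_le {f f' : ℝ → ℝ} {s : Set ℝ} (hs : s.OrdConnected)
    (hf : ∀ x ∈ s, HasDerivAt f (f' x) x) {C : ℝ≥0}
    (hC : ∀ x ∈ s, ∀ y ∈ s, |f' x| ≤ C * |f' y|) : DistortionLE f s C := by
  intro x hx y hy x' hx' y' hy'
  obtain ⟨ξ, hξ, hdist⟩ := exists_dist_eq_abs_deriv_mul hs hf hx hy
  obtain ⟨ξ', hξ', hdist'⟩ := exists_dist_eq_abs_deriv_mul hs hf hx' hy'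
  rw [← NNReal.coe_le_coe]
  push_cast
  rw [hdist, hdist']
  calc |f' ξ| * dist x y * dist x' y' ≤ C * |f' ξ'| * dist x y * dist x' y' := by
        gcongr
        exact hC ξ hξ ξ' hξ'
    _ = C * (|f' ξ'| * dist x' y' * dist x y) := by ring

lemma abs_le_exp_mul_abs_of_abs_logDeriv_le {f f' : ℝ → ℝ} {s : Set ℝ} (hs : Convex ℝ s)
    (hf : ∀ x ∈ s, HasDerivAt f (f' x) x) (hne : ∀ x ∈ s, f x ≠ 0) {c : ℝ}
    (hc : ∀ x ∈ s, |f' x / f x| ≤ c) {x y : ℝ} (hx : x ∈ s) (hy : y ∈ s) :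
    |f x| ≤ Real.exp (c * dist x y) * |f y| := by
  have hlog := hs.norm_image_sub_le_of_norm_hasDerivWithin_le
    (fun z hz => ((hf z hz).log (hne z hz)).hasDerivWithinAt) hc hy hx
  have hle : Real.log (f x) ≤ c * dist x y + Real.log (f y) :=
    sub_le_iff_le_add.1 ((le_abs_self _).trans hlog)
  simpa [Real.exp_add, Real.exp_log_eq_abs, hne x hx, hne y hy] using Real.exp_le_exp.2 hle

lemma div_abs_le_distortion {f' : ℝ → ℝ} {M : ℝ}
    (hM : ∀ x ∈ Icc (0 : ℝ) 1, ∀ y ∈ Icc (0 : ℝ) 1, |f' y| / |f' x| ≤ M) {x y : ℝ}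
    (hx : x ∈ Icc (0 : ℝ) 1) (hy : y ∈ Icc (0 : ℝ) 1) : |f' y| / |f' x| ≤ distortion f' := by
  have hM0 : 0 ≤ M := (by positivity : 0 ≤ |f' y| / |f' x|).trans (hM x hx y hy)
  have hbddAbove (φ : ℝ → ℝ) (hφ : ∀ z ∈ Icc (0 : ℝ) 1, φ z ≤ M) :
      BddAbove (range fun z => ⨆ _ : z ∈ Icc (0 : ℝ) 1, φ z) :=
    ⟨M, forall_mem_range.2 fun z => Real.iSup_le (fun hz => hφ z hz) hM0⟩
  have hle (φ : ℝ → ℝ) (hφ : ∀ z ∈ Icc (0 : ℝ) 1, φ z ≤ M) {z : ℝ} (hz : z ∈ Icc (0 : ℝ) 1) :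
      φ z ≤ ⨆ z ∈ Icc (0 : ℝ) 1, φ z :=
    (ciSup_pos (f := fun _ => φ z) hz).symm.trans_le (le_ciSup (hbddAbove φ hφ) z)
  calc |f' y| / |f' x| ≤ ⨆ y ∈ Icc (0 : ℝ) 1, |f' y| / |f' x| := hle _ (hM x hx) hy
    _ ≤ distortion f' := hle _ (fun z hz => Real.iSup_le
        (fun w => Real.iSup_le (fun hw => hM z hz w hw) hM0) hM0) hx

end Distortion

/-- The nonlinear setting in metric terms: decreasing contractions `g_k` of `[0,1]`, `k ≥ 1`, with
images in `[b_k, b_{k-1}]`, whose distortion on an interval is at most exponential in its length and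
whose distortion on `[0,1]` tends to `1` as `k → ∞`. The map `g 0` is a placeholder. -/
structure BoundedDistortionIFS where
  b : ℕ → ℝ
  g : ℕ → ℝ → ℝ
  α : ℝ≥0
  c : ℝ≥0
  b_zero : b 0 = 1
  tendsto_b : Tendsto b atTop (𝓝 0)
  strictAntiOn : ∀ k, 1 ≤ k → StrictAntiOn (g k) (Icc 0 1)
  map_zero : ∀ k, 1 ≤ k → g k 0 = b (k - 1)
  map_one : ∀ k, 1 ≤ k → g k 1 = b k
  α_lt_one : α < 1
  lipschitzOnWith : ∀ k, 1 ≤ k → LipschitzOnWith α (g k) (Icc 0 1)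
  distortionLE_exp : ∀ k, 1 ≤ k → ∀ x ∈ Icc (0 : ℝ) 1, ∀ y ∈ Icc (0 : ℝ) 1,
    DistortionLE (g k) (uIcc x y) (Real.exp (c * dist x y)).toNNReal
  eventually_distortionLE : ∀ κ : ℝ≥0, 1 < κ → ∀ᶠ k in atTop, DistortionLE (g k) (Icc 0 1) κ

namespace BoundedDistortionIFS

variable (S : BoundedDistortionIFS)

lemma strictAnti_b : StrictAnti S.b := by
  refine strictAnti_nat_of_succ_lt fun k => ?_
  simpa [S.map_zero, S.map_one] using
    S.strictAntiOn (k + 1) k.succ_pos (left_mem_Icc.2 zero_le_one) (right_mem_Icc.2 zero_le_one)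
      one_pos

lemma b_pos (k : ℕ) : 0 < S.b k :=
  (S.strictAnti_b.antitone.le_of_tendsto S.tendsto_b (k + 1)).trans_lt
    (S.strictAnti_b k.lt_succ_self)

lemma b_le_one (k : ℕ) : S.b k ≤ 1 :=
  S.b_zero ▸ S.strictAnti_b.antitone k.zero_le

lemma b_mem_Icc (k : ℕ) : S.b k ∈ Icc (0 : ℝ) 1 := ⟨(S.b_pos k).le, S.b_le_one k⟩

variable {k : ℕ}

lemma mapsTo_Icc_b (hk : 1 ≤ k) : MapsTo (S.g k) (Icc 0 1) (Icc (S.b k) (S.b (k - 1))) := by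
  rw [← S.map_one k hk, ← S.map_zero k hk]
  exact (S.strictAntiOn k hk).antitoneOn.mapsTo_Icc

lemma mapsTo_Icc (hk : 1 ≤ k) : MapsTo (S.g k) (Icc 0 1) (Icc 0 1) :=
  (S.mapsTo_Icc_b hk).mono_right (Icc_subset_Icc (S.b_pos k).le (S.b_le_one _))

lemma mapsTo_Ioo_b (hk : 1 ≤ k) : MapsTo (S.g k) (Ioo 0 1) (Ioo (S.b k) (S.b (k - 1))) := by
  rw [← S.map_one k hk, ← S.map_zero k hk]
  exact (S.strictAntiOn k hk).mapsTo_Ioo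

lemma mapsTo_Ioo (hk : 1 ≤ k) : MapsTo (S.g k) (Ioo 0 1) (Ioo 0 1) :=
  (S.mapsTo_Ioo_b hk).mono_right (Ioo_subset_Ioo (S.b_pos k).le (S.b_le_one _))

lemma mapsTo_uIcc (hk : 1 ≤ k) {x y : ℝ} (hx : x ∈ Icc (0 : ℝ) 1) (hy : y ∈ Icc (0 : ℝ) 1) :
    MapsTo (S.g k) (uIcc x y) (uIcc (S.g k x) (S.g k y)) :=
  ((S.strictAntiOn k hk).antitoneOn.mono (uIcc_subset_Icc hx hy)).mapsTo_uIcc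

variable {v w : List ℕ}

lemma mapsTo_word (hw : w ∈ wordsOver (Ici 1)) :
    MapsTo (compList S.g w) (Icc 0 1) (Icc 0 1) :=
  mapsTo_compList fun k hk => S.mapsTo_Icc (hw k hk)

lemma injOn_word (hw : w ∈ wordsOver (Ici 1)) : InjOn (compList S.g w) (Icc 0 1) :=
  injOn_compList (fun k hk => S.mapsTo_Icc (hw k hk)) fun k hk => (S.strictAntiOn k (hw k hk)).injOn

lemma lipschitzOnWith_word (hw : w ∈ wordsOver (Ici 1)) :
    LipschitzOnWith (S.α ^ w.length) (compList S.g w) (Icc 0 1) :=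
  lipschitzOnWith_compList (fun k hk => S.mapsTo_Icc (hw k hk)) fun k hk =>
    S.lipschitzOnWith k (hw k hk)

lemma mapsTo_uIcc_word (hw : w ∈ wordsOver (Ici 1)) {x y : ℝ} (hx : x ∈ Icc (0 : ℝ) 1)
    (hy : y ∈ Icc (0 : ℝ) 1) :
    MapsTo (compList S.g w) (uIcc x y) (uIcc (compList S.g w x) (compList S.g w y)) := by
  induction w with
  | nil => exact mapsTo_id _
  | cons k w ih =>
    obtain ⟨hk, hw⟩ := cons_mem_wordsOver.1 hw
    exact (S.mapsTo_uIcc hk (S.mapsTo_word hw hx) (S.mapsTo_word hw hy)).comp (ih hw)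

-- The constant `B = c / (1 - α)` solves `B * α + c = B`, which closes the induction.
lemma distortionLE_word (hw : w ∈ wordsOver (Ici 1)) {x y : ℝ} (hx : x ∈ Icc (0 : ℝ) 1)
    (hy : y ∈ Icc (0 : ℝ) 1) :
    DistortionLE (compList S.g w) (uIcc x y)
      (Real.exp (S.c / (1 - S.α) * dist x y)).toNNReal := by
  have hα : 0 < 1 - (S.α : ℝ) := sub_pos.2 (NNReal.coe_lt_one.2 S.α_lt_one)
  induction w using List.reverseRecOn generalizing x y with
  | nil =>
    refine DistortionLE.id.mono (Real.one_le_toNNReal.2 (Real.one_le_exp ?_))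
    exact mul_nonneg (div_nonneg S.c.2 hα.le) dist_nonneg
  | append_singleton v k ih =>
    obtain ⟨hv, hk⟩ := append_mem_wordsOver.1 hw
    rw [singleton_mem_wordsOver] at hk
    rw [compList_append]
    have hcontract : dist (S.g k x) (S.g k y) ≤ S.α * dist x y :=
      (S.lipschitzOnWith k hk).dist_le_mul x hx y hy
    refine ((ih hv (S.mapsTo_Icc hk hx) (S.mapsTo_Icc hk hy)).comp
      (S.distortionLE_exp k hk x hx y hy) (S.mapsTo_uIcc hk hx hy)
      ((S.strictAntiOn k hk).injOn.mono (uIcc_subset_Icc hx hy))).mono ?_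
    rw [← Real.toNNReal_mul (Real.exp_nonneg _), ← Real.exp_add]
    refine Real.toNNReal_mono (Real.exp_le_exp.2 ?_)
    calc S.c / (1 - S.α) * dist (S.g k x) (S.g k y) + S.c * dist x y
        ≤ S.c / (1 - S.α) * (S.α * dist x y) + S.c * dist x y := by gcongr
      _ = S.c / (1 - S.α) * dist x y := by field

lemma eventually_distortionLE_append_singleton {κ : ℝ≥0} (hκ : 1 < κ) :
    ∀ᶠ k in atTop, ∀ v ∈ wordsOver (Ici 1),
      DistortionLE (compList S.g (v ++ [k])) (Icc 0 1) κ := by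
  have hsqrt : 1 < NNReal.sqrt κ := by simpa using NNReal.sqrt_lt_sqrt.2 hκ
  have hlim : Tendsto (fun k => (Real.exp (S.c / (1 - S.α) * dist (S.b k) (S.b (k - 1)))).toNNReal)
      atTop (𝓝 1) := by
    have hdist := S.tendsto_b.dist (S.tendsto_b.comp (tendsto_sub_atTop_nat 1))
    simpa using tendsto_real_toNNReal
      ((Real.continuous_exp.tendsto _).comp (hdist.const_mul (S.c / (1 - S.α : ℝ))))
  filter_upwards [S.eventually_distortionLE _ hsqrt, hlim.eventually_le_const hsqrt,
    eventually_ge_atTop 1] with k hdistortion hexp hk v hv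
  have hword := S.distortionLE_word hv (S.b_mem_Icc k) (S.b_mem_Icc (k - 1))
  rw [uIcc_of_le (S.strictAnti_b.antitone (Nat.sub_le k 1))] at hword
  rw [compList_append]
  refine (hword.comp hdistortion (S.mapsTo_Icc_b hk) (S.strictAntiOn k hk).injOn).mono ?_
  exact (mul_le_mul_left hexp _).trans_eq (NNReal.mul_self_sqrt κ)

/-- The length of the cell `g_w([0,1])`; as `g_w` is monotone, it is the distance between the images
of the endpoints. -/
def cellLength (w : List ℕ) : ℝ≥0 := nndist (compList S.g w 0) (compList S.g w 1)

lemma cellLength_nil : S.cellLength [] = 1 := by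
  ext
  simp [cellLength, compList_nil]

lemma cellLength_pos (hw : w ∈ wordsOver (Ici 1)) : 0 < S.cellLength w :=
  pos_iff_ne_zero.2 <| nndist_eq_zero.not.2 <|
    (S.injOn_word hw).ne unitInterval.zero_mem unitInterval.one_mem zero_ne_one

lemma ediam_image_word_le (hw : w ∈ wordsOver (Ici 1)) :
    Metric.ediam (compList S.g w '' Icc 0 1) ≤ S.cellLength w := by
  have hmaps := S.mapsTo_uIcc_word hw unitInterval.zero_mem unitInterval.one_mem
  rw [uIcc_of_le zero_le_one] at hmaps
  refine Metric.ediam_le ?_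
  rintro _ ⟨x, hx, rfl⟩ _ ⟨y, hy, rfl⟩
  rw [edist_nndist, ENNReal.coe_le_coe, ← NNReal.coe_le_coe, coe_nndist]
  exact Real.dist_le_of_mem_uIcc (hmaps hx) (hmaps hy)

lemma cellLength_append_le (hv : v ∈ wordsOver (Ici 1)) (hw : w ∈ wordsOver (Ici 1)) :
    S.cellLength (v ++ w) ≤ S.α ^ v.length * S.cellLength w := by
  rw [cellLength, compList_append, ← ENNReal.coe_le_coe, ENNReal.coe_mul, cellLength,
    ← edist_nndist, ← edist_nndist]
  exact S.lipschitzOnWith_word hv (S.mapsTo_word hw unitInterval.zero_mem)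
    (S.mapsTo_word hw unitInterval.one_mem)

lemma cellLength_le_pow (hw : w ∈ wordsOver (Ici 1)) : S.cellLength w ≤ S.α ^ w.length := by
  simpa [cellLength_nil] using S.cellLength_append_le hw (w := []) (by simp [wordsOver])

variable {C : ℝ≥0}

lemma cellLength_mul_nndist_le (hC : DistortionLE (compList S.g w) (Icc 0 1) C) {x y : ℝ}
    (hx : x ∈ Icc (0 : ℝ) 1) (hy : y ∈ Icc (0 : ℝ) 1) :
    S.cellLength w * nndist x y ≤ C * nndist (compList S.g w x) (compList S.g w y) := by
  have hunit : nndist (0 : ℝ) 1 = 1 := by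
    ext
    simp
  simpa [hunit, cellLength] using hC unitInterval.zero_mem unitInterval.one_mem hx hy

lemma cellLength_mul_cellLength_le (hC : DistortionLE (compList S.g v) (Icc 0 1) C)
    (hw : w ∈ wordsOver (Ici 1)) :
    S.cellLength v * S.cellLength w ≤ C * S.cellLength (v ++ w) := by
  simpa only [cellLength, compList_append, Function.comp_apply] using S.cellLength_mul_nndist_le hC
    (S.mapsTo_word hw unitInterval.zero_mem) (S.mapsTo_word hw unitInterval.one_mem)

/-- An interval inside `(0,1)` that is mapped into itself by `g_1, …, g_n`. The cells `g_w([0,1])`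
may share endpoints, but the images of this interval are pairwise disjoint. -/
def core (n : ℕ) : Set ℝ := Icc (S.b n) (S.g 1 (S.b n))

variable {n : ℕ}

lemma b_one_le_map_one (n : ℕ) : S.b 1 ≤ S.g 1 (S.b n) :=
  (S.mapsTo_Icc_b le_rfl (S.b_mem_Icc n)).1

lemma core_subset_Ioo (n : ℕ) : S.core n ⊆ Ioo 0 1 := by
  refine Icc_subset_Ioo (S.b_pos n) ?_
  simpa [S.map_zero, S.b_zero] using
    S.strictAntiOn 1 le_rfl unitInterval.zero_mem (S.b_mem_Icc n) (S.b_pos n)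

lemma core_subset_Icc (n : ℕ) : S.core n ⊆ Icc 0 1 :=
  (S.core_subset_Ioo n).trans Ioo_subset_Icc_self

lemma nontrivial_core (hn : 1 ≤ n) : (S.core n).Nontrivial := by
  have hb : S.b n < 1 := S.b_zero ▸ S.strictAnti_b hn
  have hlt : S.b n < S.g 1 (S.b n) :=
    calc S.b n ≤ S.b 1 := S.strictAnti_b.antitone hn
      _ = S.g 1 1 := (S.map_one 1 le_rfl).symm
      _ < S.g 1 (S.b n) := S.strictAntiOn 1 le_rfl (S.b_mem_Icc n) unitInterval.one_mem hb
  exact nontrivial_of_lt (left_mem_Icc.2 hlt.le) (right_mem_Icc.2 hlt.le) hlt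

lemma mapsTo_core (hk : k ∈ Icc 1 n) : MapsTo (S.g k) (S.core n) (S.core n) := by
  intro x hx
  have hxI := S.core_subset_Icc n hx
  have hmem := S.mapsTo_Icc_b hk.1 hxI
  refine ⟨(S.strictAnti_b.antitone hk.2).trans hmem.1, ?_⟩
  rcases hk.1.eq_or_lt with rfl | hlt
  · exact (S.strictAntiOn 1 le_rfl).antitoneOn (S.b_mem_Icc n) hxI hx.1
  · exact (hmem.2.trans (S.strictAnti_b.antitone (Nat.le_sub_one_of_lt hlt))).trans
      (S.b_one_le_map_one n)

lemma disjoint_image_Ioo {i j : ℕ} (hi : 1 ≤ i) (hj : 1 ≤ j) (hij : i ≠ j) :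
    Disjoint (S.g i '' Ioo 0 1) (S.g j '' Ioo 0 1) := by
  have hdisj : Disjoint (Ioo (S.b i) (S.b (i - 1))) (Ioo (S.b j) (S.b (j - 1))) := by
    have h := S.strictAnti_b.antitone.pairwise_disjoint_on_Ioo_succ
      (show i - 1 ≠ j - 1 by omega)
    simpa [Function.onFun, Nat.sub_add_cancel hi, Nat.sub_add_cancel hj] using h
  exact hdisj.mono (S.mapsTo_Ioo_b hi).image_subset (S.mapsTo_Ioo_b hj).image_subset

lemma disjoint_image_word_Ioo (hv : v ∈ wordsOver (Ici 1)) (hw : w ∈ wordsOver (Ici 1))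
    (hvw : ¬ v <+: w) (hwv : ¬ w <+: v) :
    Disjoint (compList S.g v '' Ioo 0 1) (compList S.g w '' Ioo 0 1) := by
  induction v generalizing w with
  | nil => exact absurd List.nil_prefix hvw
  | cons i v ih =>
    cases w with
    | nil => exact absurd List.nil_prefix hwv
    | cons j w =>
      obtain ⟨hi, hv⟩ := cons_mem_wordsOver.1 hv
      obtain ⟨hj, hw'⟩ := cons_mem_wordsOver.1 hw
      have hsubset {u : List ℕ} (hu : u ∈ wordsOver (Ici 1)) :
          compList S.g u '' Ioo 0 1 ⊆ Ioo 0 1 :=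
        (mapsTo_compList fun k hk => S.mapsTo_Ioo (hu k hk)).image_subset
      rw [compList_cons, compList_cons, image_comp, image_comp]
      rcases eq_or_ne i j with rfl | hij
      · simp only [List.cons_prefix_cons, true_and] at hvw hwv
        rw [disjoint_iff_inter_eq_empty, ← (S.strictAntiOn i hi).injOn.image_inter
          ((hsubset hv).trans Ioo_subset_Icc_self) ((hsubset hw').trans Ioo_subset_Icc_self),
          (ih hv hw' hvw hwv).inter_eq, image_empty]
      · exact (S.disjoint_image_Ioo hi hj hij).mono (image_mono (hsubset hv))
          (image_mono (hsubset hw'))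

lemma mem_limitSet {x : ℝ} : x ∈ limitSet S.g n ↔
    ∀ l, ∃ w ∈ wordsOver (Icc 1 n), w.length = l + 1 ∧ x ∈ compList S.g w '' Icc 0 1 := by
  simp only [limitSet, mem_iInter, mem_iUnion, exists_prop]
  refine forall_congr' fun l => exists_congr fun w => ?_
  rw [wordComp_eq_compList]
  exact and_assoc.trans and_left_comm

/-- `F` is a finite iterated function system made of words over `{1, …, n}`: no word is empty or a
prefix of another one, so its cells have disjoint interiors, and the compositions of its maps have
distortion at most `κ`. -/
structure IsSubsystem (n : ℕ) (κ : ℝ≥0) (F : Finset (List ℕ)) : Prop where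
  mem_wordsOver : ∀ w ∈ F, w ∈ wordsOver (Icc 1 n)
  nil_notMem : [] ∉ F
  eq_of_prefix : ∀ v ∈ F, ∀ w ∈ F, v <+: w → v = w
  distortionLE : ∀ u ∈ wordsOver (F : Set (List ℕ)),
    DistortionLE (compList S.g u.flatten) (Icc 0 1) κ

namespace IsSubsystem

variable {S} {κ : ℝ≥0} {F : Finset (List ℕ)} {u : List (List ℕ)} {t : ℝ}

lemma mem_wordsOver_Ici (hF : S.IsSubsystem n κ F) (hw : w ∈ F) : w ∈ wordsOver (Ici 1) :=
  wordsOver_mono Icc_subset_Ici_self (hF.mem_wordsOver w hw)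

lemma flatten_mem_wordsOver (hF : S.IsSubsystem n κ F) (hu : u ∈ wordsOver (F : Set (List ℕ))) :
    u.flatten ∈ wordsOver (Icc 1 n) :=
  _root_.flatten_mem_wordsOver fun w hw => hF.mem_wordsOver w (hu w hw)

lemma one_le (hF : S.IsSubsystem n κ F) : 1 ≤ κ := by
  have h := hF.distortionLE [] (by simp [wordsOver])
  simpa [S.cellLength_nil, nndist_dist, compList_nil] using
    S.cellLength_mul_nndist_le h unitInterval.zero_mem unitInterval.one_mem

lemma prod_cellLength_rpow_div_le (hF : S.IsSubsystem n κ F) (ht : 0 ≤ t) {Z : ℝ≥0}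
    (hZ : κ ^ t ≤ Z) (hu : u ∈ wordsOver (F : Set (List ℕ))) :
    (u.map fun w => S.cellLength w ^ t / Z).prod ≤ S.cellLength u.flatten ^ t := by
  induction u using List.reverseRecOn with
  | nil => simp [S.cellLength_nil]
  | append_singleton u w ih =>
    obtain ⟨hu, hw⟩ := append_mem_wordsOver.1 hu
    rw [singleton_mem_wordsOver] at hw
    have hle := S.cellLength_mul_cellLength_le (hF.distortionLE u hu) (hF.mem_wordsOver_Ici hw)
    rw [List.map_append, List.prod_append, List.map_singleton, List.prod_singleton,
      List.flatten_append, List.flatten_singleton]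
    calc (u.map fun w => S.cellLength w ^ t / Z).prod * (S.cellLength w ^ t / Z)
        ≤ S.cellLength u.flatten ^ t * (S.cellLength w ^ t / Z) := by
          gcongr
          exact ih hu
      _ = (S.cellLength u.flatten * S.cellLength w) ^ t / Z := by
        rw [NNReal.mul_rpow, mul_div_assoc]
      _ ≤ (κ * S.cellLength (u.flatten ++ w)) ^ t / Z := by gcongr
      _ = κ ^ t / Z * S.cellLength (u.flatten ++ w) ^ t := by
        rw [NNReal.mul_rpow, mul_div_right_comm]
      _ ≤ S.cellLength (u.flatten ++ w) ^ t :=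
        mul_le_of_le_one_left' (div_le_one_of_le₀ hZ zero_le)

lemma prod_mul_edist_rpow_le (hF : S.IsSubsystem n κ F) (ht : 0 ≤ t) {Z : ℝ≥0} (hZ : κ ^ t ≤ Z)
    (hu : u ∈ wordsOver (F : Set (List ℕ))) {x y : ℝ} (hx : x ∈ Icc (0 : ℝ) 1)
    (hy : y ∈ Icc (0 : ℝ) 1) :
    ((u.map fun w => S.cellLength w ^ t / Z).prod : ℝ≥0∞) * edist x y ^ t ≤
      (κ ^ t : ℝ≥0) * edist (compList S.g u.flatten x) (compList S.g u.flatten y) ^ t := by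
  simp only [edist_nndist, ← ENNReal.coe_rpow_of_nonneg _ ht]
  norm_cast
  rw [← NNReal.mul_rpow]
  calc (u.map fun w => S.cellLength w ^ t / Z).prod * nndist x y ^ t
      ≤ S.cellLength u.flatten ^ t * nndist x y ^ t := by
        gcongr
        exact hF.prod_cellLength_rpow_div_le ht hZ hu
    _ = (S.cellLength u.flatten * nndist x y) ^ t := (NNReal.mul_rpow ..).symm
    _ ≤ (κ * nndist (compList S.g u.flatten x) (compList S.g u.flatten y)) ^ t :=
      NNReal.rpow_le_rpow (S.cellLength_mul_nndist_le (hF.distortionLE u hu) hx hy) ht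

lemma pairwise_disjoint_image_core (hF : S.IsSubsystem n κ F) :
    Pairwise (Disjoint on fun w : F => compList S.g w.1 '' S.core n) := by
  intro v w hvw
  refine (S.disjoint_image_word_Ioo (hF.mem_wordsOver_Ici v.2) (hF.mem_wordsOver_Ici w.2)
    ?_ ?_).mono (image_mono (S.core_subset_Ioo n)) (image_mono (S.core_subset_Ioo n))
  · exact fun h => hvw (Subtype.ext (hF.eq_of_prefix v v.2 w w.2 h))
  · exact fun h => hvw (Subtype.ext (hF.eq_of_prefix w w.2 v v.2 h)).symm

lemma length_le_length_flatten (hF : S.IsSubsystem n κ F)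
    (hu : u ∈ wordsOver (F : Set (List ℕ))) : u.length ≤ u.flatten.length := by
  rw [List.length_flatten, ← List.length_map List.length]
  refine List.length_le_sum_of_one_le _ ?_
  simp only [List.forall_mem_map]
  exact fun w hw => List.length_pos_iff.2 fun h => hF.nil_notMem (h ▸ hu w hw)

lemma subset_limitSet (hF : S.IsSubsystem n κ F) :
    {x | ∀ l, ∃ u : List F, u.length = l ∧
        x ∈ compList (fun w : F => compList S.g w.1) u '' S.core n} ⊆ limitSet S.g n := by
  refine fun x hx => S.mem_limitSet.2 fun l => ?_
  obtain ⟨u, hlength, hxu⟩ := hx (l + 1)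
  have hwords := hF.flatten_mem_wordsOver (map_coe_mem_wordsOver u)
  have hle := hF.length_le_length_flatten (map_coe_mem_wordsOver u)
  rw [compList_compList] at hxu
  rw [List.length_map, hlength] at hle
  rw [← List.take_append_drop (l + 1) (u.map Subtype.val).flatten] at hxu hwords
  obtain ⟨htake, hdrop⟩ := append_mem_wordsOver.1 hwords
  refine ⟨_, htake, List.length_take_of_le hle, ?_⟩
  rw [compList_append, image_comp] at hxu
  refine image_mono ?_ hxu
  exact (image_mono (S.core_subset_Icc n)).trans
    (S.mapsTo_word (wordsOver_mono Icc_subset_Ici_self hdrop)).image_subset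

theorem ofReal_le_dimH_limitSet (hF : S.IsSubsystem n κ F) (hn : 1 ≤ n) (ht : 0 < t)
    (hsum : κ ^ t < ∑ w ∈ F, S.cellLength w ^ t) :
    ENNReal.ofReal t ≤ dimH (limitSet S.g n) := by
  set Z := ∑ w ∈ F, S.cellLength w ^ t with hZ
  have htotal : ∑ w : F, ((S.cellLength w ^ t / Z : ℝ≥0) : ℝ≥0∞) = 1 := by
    rw [← ENNReal.ofNNReal_finsetSum, Finset.sum_coe_sort F fun w => S.cellLength w ^ t / Z,
      ← Finset.sum_div, ← hZ, div_self hsum.ne_bot, ENNReal.coe_one]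
  have hlength_pos (w : F) : 1 ≤ w.1.length :=
    List.length_pos_iff.2 fun h => hF.nil_notMem (h ▸ w.2)
  refine (ofReal_le_dimH_of_disjoint_contractions (K := S.core n) (α := S.α)
    (f := fun w : F => compList S.g w.1) (p := PMF.ofFintype _ htotal) (C := (κ ^ t : ℝ≥0))
    isCompact_Icc (S.nontrivial_core hn) (fun w => mapsTo_compList fun k hk =>
      S.mapsTo_core (hF.mem_wordsOver w w.2 k hk)) (fun w => ?_) S.α_lt_one
    hF.pairwise_disjoint_image_core ht ENNReal.coe_ne_top ?_).trans (dimH_mono hF.subset_limitSet)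
  · refine ((S.lipschitzOnWith_word (hF.mem_wordsOver_Ici w.2)).mono
      (S.core_subset_Icc n)).weaken ?_
    exact pow_le_of_le_one zero_le S.α_lt_one.le (Nat.one_le_iff_ne_zero.1 (hlength_pos w))
  · intro u x hx y hy
    have hprod : (u.map (PMF.ofFintype _ htotal)).prod =
        (((u.map Subtype.val).map fun w => S.cellLength w ^ t / Z).prod : ℝ≥0) := by
      refine .trans ?_ (map_list_prod ENNReal.ofNNRealHom _).symm
      rw [List.map_map, List.map_map]
      rfl
    rw [compList_compList, hprod]
    exact hF.prod_mul_edist_rpow_le ht.le hsum.le (map_coe_mem_wordsOver u)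
      (S.core_subset_Icc n hx) (S.core_subset_Icc n hy)

lemma sum_cellLength_rpow_le (hF : S.IsSubsystem n κ F) (hn : 1 ≤ n) {h : ℝ≥0}
    (hdim : dimH (limitSet S.g n) = h) :
    ∑ w ∈ F, S.cellLength w ^ (h : ℝ) ≤ κ ^ (h : ℝ) := by
  by_contra! hlt
  have hcont : ∀ a : ℝ≥0, 0 < a → ContinuousAt (fun t : ℝ => a ^ t) h := fun a ha =>
    NNReal.continuousAt_rpow (.inl ha.ne') |>.comp (continuousAt_const.prodMk continuousAt_id)
  have hsum : ContinuousAt (fun t : ℝ => ∑ w ∈ F, S.cellLength w ^ t) h :=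
    tendsto_finsetSum _ fun w hw => hcont _ (S.cellLength_pos (hF.mem_wordsOver_Ici hw))
  have hκ : ContinuousAt (fun t : ℝ => κ ^ t) h := hcont κ (one_pos.trans_le hF.one_le)
  obtain ⟨t, hlt, ht⟩ :=
    ((hκ.eventually_lt hsum hlt).filter_mono nhdsWithin_le_nhds |>.and
      (self_mem_nhdsWithin (s := Ioi (h : ℝ)))).exists
  have hle := hF.ofReal_le_dimH_limitSet hn (h.2.trans_lt ht) hlt
  rw [hdim, ENNReal.ofReal_le_iff_le_toReal ENNReal.coe_ne_top, ENNReal.coe_toReal] at hle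
  exact hle.not_gt ht

end IsSubsystem

variable {N l : ℕ}

lemma exists_cellLength_le_mul_append (hN : 1 ≤ N) :
    ∃ C : ℝ≥0, ∀ w ∈ wordsOver (Ici 1), S.cellLength w ≤ C * S.cellLength (w ++ [N]) := by
  have hmem : [N] ∈ wordsOver (Ici 1) := singleton_mem_wordsOver.2 hN
  have hpos := S.cellLength_pos hmem
  refine ⟨(Real.exp (S.c / (1 - S.α) * dist (0 : ℝ) 1)).toNNReal / S.cellLength [N], fun w hw => ?_⟩
  have hC := S.distortionLE_word hw unitInterval.zero_mem unitInterval.one_mem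
  rw [uIcc_of_le zero_le_one] at hC
  rw [div_mul_eq_mul_div, le_div_iff₀ hpos]
  exact S.cellLength_mul_cellLength_le hC hmem

lemma tendsto_tsum_unstoppedWords (hN : N ∈ Icc 1 n) {h : ℝ} (hh : 0 ≤ h)
    (hsum : ∑' w : stoppedWords n N l, (S.cellLength w : ℝ≥0∞) ^ h ≠ ∞) :
    Tendsto (fun m => ∑' w : unstoppedWords n N l m, (S.cellLength w : ℝ≥0∞) ^ h) atTop (𝓝 0) := by
  obtain ⟨C, hC⟩ := S.exists_cellLength_le_mul_append hN.1
  let toStopped : (Σ m, unstoppedWords n N l m) → stoppedWords n N l :=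
    fun w => ⟨w.2 ++ [N], append_singleton_mem_stoppedWords hN w.2.2⟩
  have hinj : toStopped.Injective := by
    rintro ⟨m, w, hw⟩ ⟨m', w', hw'⟩ heq
    obtain rfl : w = w' := List.append_cancel_right (congrArg Subtype.val heq)
    obtain rfl : m = m' := by
      have := (length_of_mem_unstoppedWords hw).symm.trans (length_of_mem_unstoppedWords hw')
      omega
    rfl
  refine ENNReal.tendsto_atTop_zero_of_tsum_ne_top (ne_top_of_le_ne_top
    (ENNReal.mul_ne_top (ENNReal.rpow_ne_top_of_nonneg hh (ENNReal.coe_ne_top (r := C))) hsum) ?_)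
  calc ∑' m, ∑' w : unstoppedWords n N l m, (S.cellLength w : ℝ≥0∞) ^ h
      = ∑' w : Σ m, unstoppedWords n N l m, (S.cellLength w.2 : ℝ≥0∞) ^ h :=
        (ENNReal.tsum_sigma' fun w : Σ m, unstoppedWords n N l m =>
          (S.cellLength w.2 : ℝ≥0∞) ^ h).symm
    _ ≤ ∑' w : Σ m, unstoppedWords n N l m,
          (C : ℝ≥0∞) ^ h * (S.cellLength (toStopped w) : ℝ≥0∞) ^ h := by
        refine ENNReal.tsum_le_tsum fun w => ?_
        rw [← ENNReal.mul_rpow_of_nonneg _ _ hh]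
        gcongr
        exact_mod_cast hC w.2 (wordsOver_mono Icc_subset_Ici_self w.2.2.1)
    _ ≤ (C : ℝ≥0∞) ^ h * ∑' w : stoppedWords n N l, (S.cellLength w : ℝ≥0∞) ^ h := by
        rw [ENNReal.tsum_mul_left]
        gcongr
        exact ENNReal.tsum_comp_le_tsum_of_injective hinj _

lemma image_word_subset_of_prefix (hw : w ∈ wordsOver (Ici 1)) (hvw : v <+: w) :
    compList S.g w '' Icc 0 1 ⊆ compList S.g v '' Icc 0 1 := by
  obtain ⟨z, rfl⟩ := hvw
  rw [compList_append, image_comp]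
  exact image_mono (S.mapsTo_word (append_mem_wordsOver.1 hw).2).image_subset

lemma limitSet_subset_iUnion_stoppedWords_union_unstoppedWords (n N l m : ℕ) :
    limitSet S.g n ⊆ ⋃ w : ↥(stoppedWords n N l ∪ unstoppedWords n N l (m + 1)),
      compList S.g w '' Icc 0 1 := by
  intro x hx
  obtain ⟨w, hw, hlength, hxw⟩ := S.mem_limitSet.1 hx (l + m)
  have hsplit := List.take_append_drop l w
  have htake : (w.take l).length = l := List.length_take_of_le (by omega)
  rcases mem_wordsOver_Iio_or_exists_prefix N (w.drop l) with hdrop | ⟨z, k, hprefix, hz, hk⟩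
  · refine mem_iUnion.2 ⟨⟨w, .inr ⟨hw, w.take l, w.drop l, hsplit.symm, htake, ?_, hdrop⟩⟩, hxw⟩
    rw [List.length_drop]
    omega
  · have hprefix' : w.take l ++ (z ++ [k]) <+: w := by
      simpa only [hsplit] using (List.prefix_append_right_inj (w.take l)).2 hprefix
    refine mem_iUnion.2 ⟨⟨_, .inl ⟨fun i hi => hw i (hprefix'.subset hi), _, z, k, rfl, htake, hz,
      hk⟩⟩, ?_⟩
    exact S.image_word_subset_of_prefix (wordsOver_mono Icc_subset_Ici_self hw) hprefix' hxw

lemma ediam_image_word_le_pow (hl : l ≤ w.length) (hw : w ∈ wordsOver (Ici 1)) :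
    Metric.ediam (compList S.g w '' Icc 0 1) ≤ (S.α : ℝ≥0∞) ^ l := by
  refine (S.ediam_image_word_le hw).trans ?_
  exact_mod_cast (S.cellLength_le_pow hw).trans (pow_le_pow_of_le_one zero_le S.α_lt_one.le hl)

lemma hausdorffMeasure_le_of_iUnion_image_word {E : Set ℝ} {h : ℝ} {B : ℝ≥0∞} (hh : 0 ≤ h)
    {W : ℕ → Set (List ℕ)} (hW : ∀ l, ∀ w ∈ W l, w ∈ wordsOver (Ici 1))
    (hlength : ∀ l, ∀ w ∈ W l, l ≤ w.length)
    (hcover : ∀ l, E ⊆ ⋃ w : W l, compList S.g w '' Icc 0 1)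
    (hsum : ∀ l, ∑' w : W l, (S.cellLength w : ℝ≥0∞) ^ h ≤ B) : μH[h] E ≤ B := by
  have hradius : Tendsto (fun l => (S.α : ℝ≥0∞) ^ l) atTop (𝓝 0) :=
    ENNReal.tendsto_pow_atTop_nhds_zero_of_lt_one (ENNReal.coe_lt_one_iff.2 S.α_lt_one)
  calc μH[h] E
      ≤ liminf (fun l => ∑' w : W l, Metric.ediam (compList S.g w '' Icc 0 1) ^ h) atTop :=
        Measure.hausdorffMeasure_le_liminf_tsum _ _ _ hradius _ (.of_forall fun l w =>
          S.ediam_image_word_le_pow (hlength l w w.2) (hW l w w.2)) (.of_forall hcover)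
    _ ≤ liminf (fun _ : ℕ => B) atTop := liminf_le_liminf <| .of_forall fun l => by
        refine (ENNReal.tsum_le_tsum fun w => ?_).trans (hsum l)
        exact ENNReal.rpow_le_rpow (S.ediam_image_word_le (hW l w w.2)) hh
    _ = B := liminf_const B

/-- Composing any word over `{1, 2, …}` with a last letter `k ≥ N` gives distortion at most `κ`: the
image of `g_k` is so short that the earlier letters add almost no distortion. -/
def DistortionLEFrom (N : ℕ) (κ : ℝ≥0) : Prop :=
  ∀ k ≥ N, ∀ v ∈ wordsOver (Ici 1), DistortionLE (compList S.g (v ++ [k])) (Icc 0 1) κ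

lemma exists_distortionLEFrom {κ : ℝ≥0} (hκ : 1 < κ) : ∃ N ≥ 1, S.DistortionLEFrom N κ := by
  obtain ⟨N, hN⟩ := eventually_atTop.1 (S.eventually_distortionLE_append_singleton hκ)
  exact ⟨max N 1, le_max_right N 1, fun k hk => hN k ((le_max_left N 1).trans hk)⟩

namespace DistortionLEFrom

variable {S} {κ : ℝ≥0}

lemma isSubsystem (hN : S.DistortionLEFrom N κ) (hκ : 1 ≤ κ)
    {F : Finset (List ℕ)} (hF : ∀ w ∈ F, w ∈ wordsOver (Icc 1 n))
    (hlast : ∀ w ∈ F, ∃ v, ∃ k ≥ N, w = v ++ [k]) (hprefix : ∀ v ∈ F, ∀ w ∈ F, v <+: w → v = w) :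
    S.IsSubsystem n κ F where
  mem_wordsOver := hF
  nil_notMem h := by
    obtain ⟨v, k, -, hv⟩ := hlast [] h
    simp at hv
  eq_of_prefix := hprefix
  distortionLE u hu := by
    induction u using List.reverseRecOn with
    | nil => exact DistortionLE.id.mono hκ
    | append_singleton u w _ =>
      rw [append_mem_wordsOver] at hu
      obtain ⟨hu, hw⟩ := hu
      rw [singleton_mem_wordsOver] at hw
      obtain ⟨v, k, hk, rfl⟩ := hlast w hw
      rw [List.flatten_append, List.flatten_singleton, ← List.append_assoc]
      have hword : u.flatten ++ v ∈ wordsOver (Icc 1 n) :=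
        append_mem_wordsOver.2 ⟨flatten_mem_wordsOver fun w hw => hF w (hu w hw),
          (append_mem_wordsOver.1 (hF _ hw)).1⟩
      exact hN k hk _ (wordsOver_mono Icc_subset_Ici_self hword)

lemma dimH_limitSet_ne_zero (hN : S.DistortionLEFrom N κ) (hκ : 1 ≤ κ)
    (hN1 : 1 ≤ N) (hn : N + 1 ≤ n) : dimH (limitSet S.g n) ≠ 0 := by
  intro hdim
  have hF : S.IsSubsystem n κ {[N], [N + 1]} := by
    refine hN.isSubsystem hκ ?_ ?_ ?_
    · simp [singleton_mem_wordsOver]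
      omega
    · simp only [Finset.mem_insert, Finset.mem_singleton, forall_eq_or_imp, forall_eq]
      exact ⟨⟨[], N, le_rfl, rfl⟩, [], N + 1, N.le_succ, rfl⟩
    · simp
  simpa using hF.sum_cellLength_rpow_le (by omega) (h := 0) (by simpa using hdim)

lemma tsum_stoppedWords_le (hN : S.DistortionLEFrom N κ) (hκ : 1 ≤ κ) (hn : 1 ≤ n)
    {h : ℝ≥0} (hdim : dimH (limitSet S.g n) = h) (l : ℕ) :
    ∑' w : stoppedWords n N l, (S.cellLength w : ℝ≥0∞) ^ (h : ℝ) ≤ (κ : ℝ≥0∞) ^ (h : ℝ) := by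
  refine ENNReal.summable.tsum_le_of_sum_le fun s => ?_
  have hmem : ∀ w ∈ s.map (Function.Embedding.subtype _), w ∈ stoppedWords n N l := fun w hw => by
    obtain ⟨w, -, rfl⟩ := Finset.mem_map.1 hw
    exact w.2
  have hF : S.IsSubsystem n κ (s.map (Function.Embedding.subtype _)) := by
    refine hN.isSubsystem hκ (fun w hw => (hmem w hw).1) (fun w hw => ?_)
      (fun v hv w hw => eq_of_prefix_of_mem_stoppedWords (hmem v hv) (hmem w hw))
    obtain ⟨-, v, z, k, rfl, -, -, hk⟩ := hmem w hw
    exact ⟨v ++ z, k, hk, (List.append_assoc ..).symm⟩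
  have hle := hF.sum_cellLength_rpow_le hn hdim
  rw [Finset.sum_map] at hle
  simp only [← ENNReal.coe_rpow_of_nonneg _ h.coe_nonneg]
  exact_mod_cast hle

theorem hausdorffMeasure_limitSet_le (hN : S.DistortionLEFrom N κ) (hκ : 1 ≤ κ)
    (hNn : N ∈ Icc 1 n) {h : ℝ≥0} (hdim : dimH (limitSet S.g n) = h) :
    μH[h] (limitSet S.g n) ≤ (κ : ℝ≥0∞) ^ (h : ℝ) := by
  have hstopped := hN.tsum_stoppedWords_le hκ (hNn.1.trans hNn.2) hdim
  refine ENNReal.le_of_forall_pos_le_add fun ε hε _ => ?_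
  have hunstopped (l : ℕ) : ∃ m, ∑' w : unstoppedWords n N l (m + 1),
      (S.cellLength w : ℝ≥0∞) ^ (h : ℝ) ≤ ε := by
    have hlim := S.tendsto_tsum_unstoppedWords hNn h.2
      (ne_top_of_le_ne_top (by finiteness) (hstopped l))
    exact ((hlim.comp (tendsto_add_atTop_nat 1)).eventually_le_const
      (ENNReal.coe_pos.2 hε)).exists
  choose m hm using hunstopped
  refine S.hausdorffMeasure_le_of_iUnion_image_word h.2
    (W := fun l => stoppedWords n N l ∪ unstoppedWords n N l (m l + 1)) ?_ ?_
    (fun l => S.limitSet_subset_iUnion_stoppedWords_union_unstoppedWords n N l (m l))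
    fun l => (ENNReal.tsum_union_le (fun w => (S.cellLength w : ℝ≥0∞) ^ (h : ℝ)) _ _).trans
      (add_le_add (hstopped l) (hm l))
  · rintro l w (hw | hw) <;> exact wordsOver_mono Icc_subset_Ici_self hw.1
  · rintro l w (hw | hw)
    · exact le_length_of_mem_stoppedWords hw
    · exact Nat.le.intro (length_of_mem_unstoppedWords hw).symm

end DistortionLEFrom

lemma eventually_hausdorffMeasure_limitSet_le {h : ℕ → ℝ}
    (hh : ∀ᶠ n in atTop, dimH (limitSet S.g n) = ENNReal.ofReal (h n)) {κ : ℝ≥0} (hκ : 1 < κ) :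
    ∀ᶠ n in atTop, μH[h n] (limitSet S.g n) ≤ κ := by
  obtain ⟨N, hN1, hN⟩ := S.exists_distortionLEFrom hκ
  filter_upwards [hh, eventually_ge_atTop (N + 1)] with n hdim hn
  have hpos : 0 < h n := by
    rw [← ENNReal.ofReal_pos, ← hdim, pos_iff_ne_zero]
    exact hN.dimH_limitSet_ne_zero hκ.le hN1 hn
  have hle_one : h n ≤ 1 := by
    rw [← ENNReal.ofReal_le_one, ← hdim, ← Real.dimH_univ]
    exact dimH_mono (subset_univ _)
  calc μH[h n] (limitSet S.g n) ≤ (κ : ℝ≥0∞) ^ h n := by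
        simpa only [Real.coe_toNNReal _ hpos.le] using
          hN.hausdorffMeasure_limitSet_le hκ.le ⟨hN1, N.le_succ.trans hn⟩ hdim
    _ ≤ (κ : ℝ≥0∞) ^ (1 : ℝ) := by
        gcongr
        exact_mod_cast hκ.le
    _ = κ := ENNReal.rpow_one _

end BoundedDistortionIFS

namespace NonlinearIFS

variable (S : NonlinearIFS) {k : ℕ} {c : ℝ}

lemma lipschitzOnWith (hk : 1 ≤ k) {α : ℝ} (hα : ∀ x ∈ Icc (0 : ℝ) 1, |S.g' k x| < α) :
    LipschitzOnWith α.toNNReal (S.g k) (Icc 0 1) := by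
  refine (convex_Icc 0 1).lipschitzOnWith_of_nnnorm_hasDerivWithin_le
    (fun x hx => (S.deriv1 k hk x hx).hasDerivWithinAt) fun x hx => ?_
  exact NNReal.le_toNNReal_of_coe_le (hα x hx).le

lemma abs_deriv_le_exp_mul_abs_deriv (hk : 1 ≤ k)
    (hc : ∀ x ∈ Icc (0 : ℝ) 1, |S.g'' k x / S.g' k x| < c) {x y : ℝ} (hx : x ∈ Icc (0 : ℝ) 1)
    (hy : y ∈ Icc (0 : ℝ) 1) : |S.g' k x| ≤ Real.exp (c * dist x y) * |S.g' k y| :=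
  abs_le_exp_mul_abs_of_abs_logDeriv_le (convex_Icc 0 1) (S.deriv2 k hk) (S.deriv_ne k hk)
    (fun z hz => (hc z hz).le) hx hy

lemma distortionLE_uIcc (hk : 1 ≤ k) (hc0 : 0 ≤ c)
    (hc : ∀ x ∈ Icc (0 : ℝ) 1, |S.g'' k x / S.g' k x| < c) {x y : ℝ} (hx : x ∈ Icc (0 : ℝ) 1)
    (hy : y ∈ Icc (0 : ℝ) 1) :
    DistortionLE (S.g k) (uIcc x y) (Real.exp (c * dist x y)).toNNReal := by
  have hsub := uIcc_subset_Icc hx hy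
  refine distortionLE_of_abs_deriv_le ordConnected_uIcc (fun z hz => S.deriv1 k hk z (hsub hz))
    fun z hz z' hz' => ?_
  rw [Real.coe_toNNReal _ (Real.exp_nonneg _)]
  refine (S.abs_deriv_le_exp_mul_abs_deriv hk hc (hsub hz) (hsub hz')).trans ?_
  gcongr
  exact Real.dist_le_of_mem_uIcc hz hz'

lemma distortionLE_of_distortion_le (hk : 1 ≤ k)
    (hc : ∀ x ∈ Icc (0 : ℝ) 1, |S.g'' k x / S.g' k x| < c) {κ : ℝ≥0}
    (hκ : distortion (S.g' k) ≤ κ) : DistortionLE (S.g k) (Icc 0 1) κ := by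
  have hc0 : 0 ≤ c := (abs_nonneg _).trans (hc 0 unitInterval.zero_mem).le
  have hbound : ∀ x ∈ Icc (0 : ℝ) 1, ∀ y ∈ Icc (0 : ℝ) 1,
      |S.g' k y| / |S.g' k x| ≤ Real.exp c := fun x hx y hy => by
    rw [div_le_iff₀ (abs_pos.2 (S.deriv_ne k hk x hx))]
    refine (S.abs_deriv_le_exp_mul_abs_deriv hk hc hy hx).trans ?_
    gcongr
    exact mul_le_of_le_one_right hc0 (Real.dist_le_of_mem_Icc_01 hy hx)
  refine distortionLE_of_abs_deriv_le ordConnected_Icc (S.deriv1 k hk) fun x hx y hy => ?_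
  rw [← div_le_iff₀ (abs_pos.2 (S.deriv_ne k hk y hy))]
  exact (div_abs_le_distortion hbound hy hx).trans hκ

lemma eventually_distortionLE {κ : ℝ≥0} (hκ : 1 < κ) :
    ∀ᶠ k in atTop, DistortionLE (S.g k) (Icc 0 1) κ := by
  obtain ⟨c, -, hc⟩ := S.N3
  filter_upwards [S.N4.eventually_le_const (NNReal.one_lt_coe.2 hκ), eventually_ge_atTop 1]
    with k hle hk
  exact S.distortionLE_of_distortion_le hk (hc k hk) hle

/-- The derivative conditions of the nonlinear setting, read as conditions on distances. -/
def toBoundedDistortionIFS : BoundedDistortionIFS where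
  b := S.b
  g := S.g
  α := S.N5.choose.toNNReal
  c := S.N3.choose.toNNReal
  b_zero := S.b_zero
  tendsto_b := S.b_lim
  strictAntiOn := S.g_anti
  map_zero := S.g_zero
  map_one := S.g_one
  α_lt_one := Real.toNNReal_lt_one.2 S.N5.choose_spec.1
  lipschitzOnWith k hk := S.lipschitzOnWith hk (S.N5.choose_spec.2 k hk)
  distortionLE_exp k hk x hx y hy := by
    obtain ⟨hc0, hc⟩ := S.N3.choose_spec
    rw [Real.coe_toNNReal _ hc0.le]
    exact S.distortionLE_uIcc hk hc0.le (hc k hk) hx hy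
  eventually_distortionLE _ := S.eventually_distortionLE

end NonlinearIFS

theorem nonlinear_limsup_hausdorff_measure_le_one_general (S : BoundedDistortionIFS) {h : ℕ → ℝ}
    (hh : ∀ᶠ n in atTop, dimH (limitSet S.g n) = ENNReal.ofReal (h n)) :
    limsup (fun n => μH[h n] (limitSet S.g n)) atTop ≤ 1 := by
  refine ENNReal.le_of_forall_pos_le_add fun ε hε _ => ?_
  refine limsup_le_of_le (by isBoundedDefault) ?_
  exact_mod_cast S.eventually_hausdorffMeasure_limitSet_le hh (lt_add_of_pos_right 1 hε)

/-- In the nonlinear setting, `limsup_{n→∞} H_{h_n}(J_n) ≤ 1`. -/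
theorem nonlinear_limsup_hausdorff_measure_le_one (S : NonlinearIFS) :
    Filter.limsup (fun n : ℕ => μH[S.h n] (limitSet S.g n)) Filter.atTop ≤ 1 := by
  exact nonlinear_limsup_hausdorff_measure_le_one_general S.toBoundedDistortionIFS
    (eventually_atTop.2 ⟨1, S.h_dim⟩)
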